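/- Let f > 0 and let a, b be reals with 0 ≤ a < b ≤ f and 4·(b − a) ≤ a + b. Set t = 1/f and δ = 5(b − a)²/(24·f²). Let N ≥ 2 and let E₁ ≤ E₂ ≤ ⋯ ≤ E_N be reals with 0 ≤ E₁ ≤ a, E_N ≤ f, and E_N − E₁ ≥ b − a. Let p₁, …, p_N be nonnegative reals with Σ_j p_j = 1 and Σ_j p_j·E_j ≤ E₁ + 5(b − a)³/(24·f²). Then Σ_j p_j·cos²(E_j·t/2) ≥ cos²(b·t/2) + δ. -/

import Mathlib

open Real

/-!
Measure all energies in units of `f`, so that `b ≤ 1`. Since `cos² (x / 2) = (1 + cos x) / 2`, it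
suffices to compare averages of the cosine. The cosine is 1-Lipschitz and every energy lies above
the ground energy `e`, so averaging loses at most the mean excess energy `5 (b - a)³ / 24`.
Moreover `cos e ≥ cos a`, and `cos a - cos b = 2 sin ((a + b) / 2) sin ((b - a) / 2)` is at least
a constant times `(a + b) (b - a)`. Once `a + b ≥ 2 (b - a)`, that is `b ≤ 3 a`, this is large
enough to pay for both the loss and the advantage.
-/

theorem five_sixths_mul_le_sin {x : ℝ} (hx₀ : 0 ≤ x) (hx₁ : x ≤ 1) : 5 / 6 * x ≤ sin x := by
  have cube_le : x ^ 3 ≤ x := pow_le_of_le_one hx₀ hx₁ three_ne_zero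
  linarith [sin_ge_sub_cube hx₀]

theorem mul_sq_sub_sq_le_cos_sub_cos {x y : ℝ} (hx : 0 ≤ x) (hxy : x ≤ y) (hy : y ≤ 1) :
    25 / 72 * (y ^ 2 - x ^ 2) ≤ cos x - cos y := by
  have sin_mid : 5 / 6 * ((y + x) / 2) ≤ sin ((y + x) / 2) :=
    five_sixths_mul_le_sin (by linarith) (by linarith)
  have sin_half_diff : 5 / 6 * ((y - x) / 2) ≤ sin ((y - x) / 2) :=
    five_sixths_mul_le_sin (by linarith) (by linarith)
  calc 25 / 72 * (y ^ 2 - x ^ 2)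
      = 2 * ((5 / 6 * ((y + x) / 2)) * (5 / 6 * ((y - x) / 2))) := by ring
    _ ≤ 2 * (sin ((y + x) / 2) * sin ((y - x) / 2)) := by
        gcongr
        linarith
    _ = cos x - cos y := by linarith [cos_sub_cos y x]

theorem cos_add_sq_add_cube_le_cos {x y : ℝ} (hxy : x ≤ y) (hyx : y ≤ 3 * x) (hy : y ≤ 1) :
    cos y + 5 * (y - x) ^ 2 / 12 + 5 * (y - x) ^ 3 / 24 ≤ cos x := by
  have cube_le_sq : (y - x) ^ 3 ≤ (y - x) ^ 2 :=
    pow_le_pow_of_le_one (by linarith) (by linarith) (by norm_num)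
  have two_mul_sq_le : 2 * (y - x) ^ 2 ≤ y ^ 2 - x ^ 2 :=
    calc 2 * (y - x) ^ 2 = 2 * (y - x) * (y - x) := by ring
      _ ≤ (y + x) * (y - x) := mul_le_mul_of_nonneg_right (by linarith) (by linarith)
      _ = y ^ 2 - x ^ 2 := by ring
  linarith [mul_sq_sub_sq_le_cos_sub_cos (by linarith) hxy hy, sq_nonneg (y - x)]

section WeightedAverage

variable {ι : Type*} {s : Finset ι} {p x : ι → ℝ} {e : ℝ}

theorem sub_mul_sum_sub_le_sum_of_lipschitzWith {g : ℝ → ℝ} {K : NNReal}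
    (hg : LipschitzWith K g) (hp : ∀ i ∈ s, 0 ≤ p i) (hsum : ∑ i ∈ s, p i = 1)
    (hx : ∀ i ∈ s, e ≤ x i) :
    g e - K * (∑ i ∈ s, p i * x i - e) ≤ ∑ i ∈ s, p i * g (x i) := by
  have lower_bound : ∀ i ∈ s, g e - K * (x i - e) ≤ g (x i) := fun i hi ↦ by
    have hdist : dist e (x i) = x i - e := by
      rw [dist_comm, Real.dist_eq, abs_of_nonneg (sub_nonneg.2 (hx i hi))]
    linarith [hdist ▸ hg.le_add_mul e (x i)]
  calc g e - K * (∑ i ∈ s, p i * x i - e)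
      = (∑ i ∈ s, p i) * (g e + K * e) - K * ∑ i ∈ s, p i * x i := by rw [hsum]; ring
    _ = ∑ i ∈ s, p i * (g e - K * (x i - e)) := by
        rw [Finset.sum_mul, Finset.mul_sum, ← Finset.sum_sub_distrib]
        exact Finset.sum_congr rfl fun i _ ↦ by ring
    _ ≤ ∑ i ∈ s, p i * g (x i) :=
        Finset.sum_le_sum fun i hi ↦ mul_le_mul_of_nonneg_left (lower_bound i hi) (hp i hi)

theorem sum_mul_cos_half_sq (hsum : ∑ i ∈ s, p i = 1) :
    ∑ i ∈ s, p i * cos (x i / 2) ^ 2 = (1 + ∑ i ∈ s, p i * cos (x i)) / 2 := by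
  rw [← hsum, ← Finset.sum_add_distrib, Finset.sum_div]
  exact Finset.sum_congr rfl fun i _ ↦ by rw [cos_sq, mul_div_cancel₀ _ two_ne_zero]; ring

theorem cos_half_sq_add_le_sum {a b : ℝ} (hab : a ≤ b) (hba : b ≤ 3 * a) (hb : b ≤ 1)
    (he : 0 ≤ e) (hea : e ≤ a) (hx : ∀ i ∈ s, e ≤ x i)
    (hp : ∀ i ∈ s, 0 ≤ p i) (hsum : ∑ i ∈ s, p i = 1)
    (hmean : ∑ i ∈ s, p i * x i ≤ e + 5 * (b - a) ^ 3 / 24) :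
    cos (b / 2) ^ 2 + 5 * (b - a) ^ 2 / 24 ≤ ∑ i ∈ s, p i * cos (x i / 2) ^ 2 := by
  have cos_a_le_cos_e : cos a ≤ cos e :=
    cos_le_cos_of_nonneg_of_le_pi he (by linarith [pi_gt_three]) hea
  have averaging_loss : cos e - (∑ i ∈ s, p i * x i - e) ≤ ∑ i ∈ s, p i * cos (x i) := by
    simpa only [NNReal.coe_one, one_mul] using
      sub_mul_sum_sub_le_sum_of_lipschitzWith lipschitzWith_cos hp hsum hx
  rw [sum_mul_cos_half_sq hsum, cos_sq, mul_div_cancel₀ _ two_ne_zero]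
  linarith [cos_add_sq_add_cube_le_cos hab hba hb]

end WeightedAverage

theorem stmt4_general {ι : Type*} (s : Finset ι) {f a b e : ℝ} (hf : 0 < f) (hab : a ≤ b)
    (hba : b ≤ 3 * a) (hbf : b ≤ f) (he : 0 ≤ e) (hea : e ≤ a)
    (E : ι → ℝ) (hE : ∀ j ∈ s, e ≤ E j)
    (p : ι → ℝ) (hp : ∀ j ∈ s, 0 ≤ p j) (hsum : ∑ j ∈ s, p j = 1)
    (hmean : ∑ j ∈ s, p j * E j ≤ e + 5 * (b - a) ^ 3 / (24 * f ^ 2)) :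
    cos (b * (1 / f) / 2) ^ 2 + 5 * (b - a) ^ 2 / (24 * f ^ 2) ≤
      ∑ j ∈ s, p j * cos (E j * (1 / f) / 2) ^ 2 := by
  simp only [mul_one_div]
  have mean_div_le : ∑ j ∈ s, p j * (E j / f) ≤ e / f + 5 * (b / f - a / f) ^ 3 / 24 :=
    calc ∑ j ∈ s, p j * (E j / f) = (∑ j ∈ s, p j * E j) / f := by
          simp only [← mul_div_assoc, Finset.sum_div]
      _ ≤ (e + 5 * (b - a) ^ 3 / (24 * f ^ 2)) / f := by gcongr
      _ = e / f + 5 * (b / f - a / f) ^ 3 / 24 := by field_simp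
  calc cos (b / f / 2) ^ 2 + 5 * (b - a) ^ 2 / (24 * f ^ 2)
      = cos (b / f / 2) ^ 2 + 5 * (b / f - a / f) ^ 2 / 24 := by field_simp
    _ ≤ ∑ j ∈ s, p j * cos (E j / f / 2) ^ 2 :=
        cos_half_sq_add_le_sum (by gcongr) (by rw [← mul_div_assoc]; gcongr)
          ((div_le_one hf).2 hbf) (by positivity) (by gcongr)
          (fun j hj ↦ div_le_div_of_nonneg_right (hE j hj) hf.le) hp hsum mean_div_le

/-- Acceptance-probability lemma for one-bit phase estimation: with `t = 1/f` and
`δ = 5 (b-a)² / (24 f²)`, a state whose energy distribution `p` over eigenvalues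
`E 0 ≤ ⋯ ≤ E (N-1)` (with `0 ≤ E 0 ≤ a`, `E (N-1) ≤ f`, `E (N-1) - E 0 ≥ b - a`)
has mean energy at most `E 0 + 5 (b-a)³/(24 f²)` is accepted with probability at least
`cos²(b t / 2) + δ`. -/
theorem stmt4 (f a b : ℝ) (hf : 0 < f) (ha : 0 ≤ a) (hab : a < b) (hbf : b ≤ f)
    (hsmall : 4 * (b - a) ≤ a + b)
    (N : ℕ) (hN : 2 ≤ N) (E : Fin N → ℝ) (hmono : Monotone E)
    (hE1nonneg : 0 ≤ E ⟨0, by omega⟩) (hE1a : E ⟨0, by omega⟩ ≤ a)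
    (hENf : E ⟨N - 1, by omega⟩ ≤ f)
    (hgap : b - a ≤ E ⟨N - 1, by omega⟩ - E ⟨0, by omega⟩)
    (p : Fin N → ℝ) (hp : ∀ j, 0 ≤ p j) (hsum : ∑ j, p j = 1)
    (hmean : ∑ j, p j * E j ≤ E ⟨0, by omega⟩ + 5 * (b - a) ^ 3 / (24 * f ^ 2)) :
    cos (b * (1 / f) / 2) ^ 2 + 5 * (b - a) ^ 2 / (24 * f ^ 2) ≤
      ∑ j, p j * cos (E j * (1 / f) / 2) ^ 2 := by
  exact stmt4_general Finset.univ hf hab.le (by linarith) hbf hE1nonneg hE1a E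
    (fun j _ ↦ hmono (Nat.zero_le j)) p (fun j _ ↦ hp j) hsum hmean
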